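/- Fix E > 0 and define p(r,ρ) = √(ρ² + E/cosh²r) on ℝ². Consider the Hamiltonian system r′(t) = (∂_ρ p)(r(t),ρ(t)), ρ′(t) = −(∂_r p)(r(t),ρ(t)). Then: (i) for every initial condition (r₀,ρ₀) ∈ ℝ² the maximal solution is defined for all t ∈ ℝ; (ii) the forward trajectory satisfies sup_{t ≥ 0} |r(t)| < ∞ if and only if ρ₀ = −p(r₀,ρ₀) tanh r₀; (iii) the backward trajectory satisfies sup_{t ≤ 0} |r(t)| < ∞ if and only if ρ₀ = p(r₀,ρ₀) tanh r₀; consequently the full trajectory is bounded if and only if (r₀,ρ₀) = (0,0). -/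

import Mathlib

/-- `p(r,ρ) = √(ρ² + E/cosh²r)`. -/
noncomputable def pF (E : ℝ) (q : ℝ × ℝ) : ℝ :=
  Real.sqrt (q.2 ^ 2 + E / Real.cosh q.1 ^ 2)

/-!
On a level set `p = P > 0` the functions `s = sinh r` and `v = cosh r * ρ / P` satisfy `s' = v`,
`v' = s`, so Hamilton's equations become the linear saddle, with `s t = s₀ * cosh t + v₀ * sinh t`.
Hence `sinh r`, and with it `r`, stays bounded in the future iff `s₀ + v₀ = 0` and in the past iff
`s₀ - v₀ = 0`, that is, iff `ρ₀ = ∓ p * tanh r₀`.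
-/

open Real

section Boundedness

lemma exists_abs_sinh_le_iff {ι : Type*} {S : ι → Prop} {f : ι → ℝ} :
    (∃ M, ∀ i, S i → |sinh (f i)| ≤ M) ↔ ∃ M, ∀ i, S i → |f i| ≤ M := by
  simp only [abs_sinh]
  constructor
  · rintro ⟨M, hM⟩
    exact ⟨arsinh M, fun i hi => sinh_le_sinh.mp ((hM i hi).trans_eq (sinh_arsinh M).symm)⟩
  · rintro ⟨M, hM⟩
    exact ⟨sinh M, fun i hi => sinh_le_sinh.mpr (hM i hi)⟩

lemma bounded_forward_cosh_add_sinh_iff (a b : ℝ) :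
    (∃ M, ∀ t, 0 ≤ t → |a * cosh t + b * sinh t| ≤ M) ↔ a + b = 0 := by
  have split_decaying (t : ℝ) :
      a * cosh t + b * sinh t = (a + b) * sinh t + a * exp (-t) := by
    rw [← cosh_sub_sinh]; ring
  have decaying_le {t : ℝ} (ht : 0 ≤ t) : |a * exp (-t)| ≤ |a| := by
    rw [abs_mul, abs_exp]
    exact mul_le_of_le_one_right (abs_nonneg a) (exp_le_one_iff.mpr (neg_nonpos.mpr ht))
  simp only [split_decaying]
  constructor
  · rintro ⟨M, hM⟩
    by_contra hab
    have growing_le {t : ℝ} (ht : 0 ≤ t) : |a + b| * sinh t ≤ M + |a| := by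
      rw [← abs_of_nonneg (sinh_nonneg_iff.mpr ht), ← abs_mul]
      calc |(a + b) * sinh t| = |(a + b) * sinh t + a * exp (-t) - a * exp (-t)| := by ring_nf
        _ ≤ |(a + b) * sinh t + a * exp (-t)| + |a * exp (-t)| := abs_sub _ _
        _ ≤ M + |a| := add_le_add (hM t ht) (decaying_le ht)
    have hM_nonneg : 0 ≤ M := (abs_nonneg _).trans (hM 0 le_rfl)
    have h := growing_le (t := arsinh ((M + |a| + 1) / |a + b|))
      (arsinh_nonneg_iff.mpr (by positivity))
    rw [sinh_arsinh, mul_div_cancel₀ _ (abs_ne_zero.mpr hab)] at h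
    linarith
  · intro hab
    exact ⟨|a|, fun t ht => by simpa [hab] using decaying_le ht⟩

lemma bounded_backward_cosh_add_sinh_iff (a b : ℝ) :
    (∃ M, ∀ t, t ≤ 0 → |a * cosh t + b * sinh t| ≤ M) ↔ a - b = 0 := by
  rw [sub_eq_add_neg, ← bounded_forward_cosh_add_sinh_iff]
  refine exists_congr fun M => (Equiv.neg ℝ).forall_congr fun {t} => ?_
  simp

end Boundedness

section Hamiltonian

variable {E : ℝ} {q : ℝ × ℝ}

/-- The Hamiltonian vector field `(∂_ρ p, -∂_r p)` of `p = pF E`. It is given by `deriv`, so it is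
meaningful only where `p` is differentiable, in particular where `p > 0`. -/
noncomputable def hamiltonianField (E : ℝ) (q : ℝ × ℝ) : ℝ × ℝ :=
  (deriv (fun s => pF E (q.1, s)) q.2, -deriv (fun s => pF E (s, q.2)) q.1)

lemma pF_pos (hE : 0 < E) (q : ℝ × ℝ) : 0 < pF E q :=
  sqrt_pos.mpr (by positivity)

lemma pF_sq (hq : 0 < pF E q) : pF E q ^ 2 = q.2 ^ 2 + E / cosh q.1 ^ 2 :=
  sq_sqrt (sqrt_pos.mp hq).le

lemma hasDerivAt_pF_snd (hq : 0 < pF E q) :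
    HasDerivAt (fun s => pF E (q.1, s)) (q.2 / pF E q) q.2 := by
  have h : HasDerivAt (fun s => s ^ 2 + E / cosh q.1 ^ 2) (2 * q.2) q.2 := by
    simpa using (hasDerivAt_pow 2 q.2).add_const (E / cosh q.1 ^ 2)
  exact (h.sqrt (sqrt_pos.mp hq).ne').congr_deriv (mul_div_mul_left _ _ two_ne_zero)

lemma hasDerivAt_pF_fst (hq : 0 < pF E q) :
    HasDerivAt (fun s => pF E (s, q.2)) (-(E * sinh q.1 / (cosh q.1 ^ 3 * pF E q))) q.1 := by
  have h : HasDerivAt (fun s => q.2 ^ 2 + E / cosh s ^ 2)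
      (2 * -(E * sinh q.1 / cosh q.1 ^ 3)) q.1 := by
    refine (((hasDerivAt_const q.1 E).div ((hasDerivAt_cosh q.1).pow 2)
      (pow_pos (cosh_pos q.1) 2).ne').const_add (q.2 ^ 2)).congr_deriv ?_
    simp only [Pi.pow_apply, zero_mul, Nat.cast_ofNat, Nat.add_one_sub_one, pow_one, zero_sub,
      mul_neg]
    field_simp
  refine (h.sqrt (sqrt_pos.mp hq).ne').congr_deriv ?_
  rw [mul_div_mul_left _ _ two_ne_zero, neg_div, div_div]
  rfl

lemma hamiltonianField_eq (hq : 0 < pF E q) :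
    hamiltonianField E q = (q.2 / pF E q, E * sinh q.1 / (cosh q.1 ^ 3 * pF E q)) := by
  rw [hamiltonianField, (hasDerivAt_pF_snd hq).deriv, (hasDerivAt_pF_fst hq).deriv, neg_neg]

end Hamiltonian

section Linearization

variable {E P s v : ℝ} {q : ℝ × ℝ}

/-- The point `(r, ρ)` of the level set `p = P` with linearizing coordinates `s = sinh r` and
`v = cosh r * ρ / P`. -/
noncomputable def phasePoint (P s v : ℝ) : ℝ × ℝ :=
  (arsinh s, P * v / cosh (arsinh s))

lemma phasePoint_sinh_cosh (hP : P ≠ 0) (q : ℝ × ℝ) :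
    phasePoint P (sinh q.1) (cosh q.1 * q.2 / P) = q := by
  ext
  · exact arsinh_sinh q.1
  · simp only [phasePoint, arsinh_sinh]
    field_simp

lemma pF_phasePoint (hP : 0 ≤ P) (hE : E = P ^ 2 * (1 + s ^ 2 - v ^ 2)) :
    pF E (phasePoint P s v) = P := by
  have hc_sq : cosh (arsinh s) ^ 2 = 1 + s ^ 2 := by rw [cosh_sq', sinh_arsinh]
  have hsq : (P * v / cosh (arsinh s)) ^ 2 + E / cosh (arsinh s) ^ 2 = P ^ 2 := by
    rw [hE, ← hc_sq]
    field_simp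
    ring
  rw [pF, phasePoint, hsq, sqrt_sq hP]

lemma hasDerivAt_phasePoint (hP : 0 < P) {s v : ℝ → ℝ} {t : ℝ}
    (hs : HasDerivAt s (v t) t) (hv : HasDerivAt v (s t) t)
    (hE : E = P ^ 2 * (1 + s t ^ 2 - v t ^ 2)) :
    HasDerivAt (fun τ => phasePoint P (s τ) (v τ))
      (hamiltonianField E (phasePoint P (s t) (v t))) t := by
  have hp : pF E (phasePoint P (s t) (v t)) = P := pF_phasePoint hP.le hE
  rw [hamiltonianField_eq (hp.symm ▸ hP), hp]
  have hr : HasDerivAt (fun τ => arsinh (s τ)) (v t / cosh (arsinh (s t))) t :=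
    hs.arsinh.congr_deriv (by rw [cosh_arsinh, smul_eq_mul, inv_mul_eq_div])
  have hρ := (hv.const_mul P).div hr.cosh (cosh_pos _).ne'
  have hc_sq : cosh (arsinh (s t)) ^ 2 = 1 + s t ^ 2 := by rw [cosh_sq', sinh_arsinh]
  refine (hr.congr_deriv ?_).prodMk (hρ.congr_deriv ?_)
  · simp only [phasePoint]
    field_simp
  · simp only [phasePoint, sinh_arsinh, hE, ← hc_sq]
    field_simp

lemma energy_eq_of_pF_pos (hq : 0 < pF E q) :
    E = pF E q ^ 2 * (1 + sinh q.1 ^ 2 - (cosh q.1 * q.2 / pF E q) ^ 2) :=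
  calc E = cosh q.1 ^ 2 * (pF E q ^ 2 - q.2 ^ 2) := by rw [pF_sq hq]; field_simp; ring
    _ = pF E q ^ 2 * (1 + sinh q.1 ^ 2 - (cosh q.1 * q.2 / pF E q) ^ 2) := by
      rw [← cosh_sq']; field_simp

end Linearization

section Flow

variable {E : ℝ} {q : ℝ × ℝ}

/-- The Hamiltonian flow of `pF E` started at a point `q` with `p > 0`: the linear saddle flow
`(a, b) ↦ (a * cosh t + b * sinh t, a * sinh t + b * cosh t)` in the coordinates of
`phasePoint`. -/
noncomputable def pFlow (E : ℝ) (q : ℝ × ℝ) (t : ℝ) : ℝ × ℝ :=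
  phasePoint (pF E q)
    (sinh q.1 * cosh t + cosh q.1 * q.2 / pF E q * sinh t)
    (sinh q.1 * sinh t + cosh q.1 * q.2 / pF E q * cosh t)

lemma pFlow_zero (hq : 0 < pF E q) : pFlow E q 0 = q := by
  simpa [pFlow] using phasePoint_sinh_cosh hq.ne' q

lemma pFlow_origin (E t : ℝ) : pFlow E (0, 0) t = (0, 0) := by
  simp [pFlow, phasePoint]

lemma hasDerivAt_pFlow (hq : 0 < pF E q) (t : ℝ) :
    HasDerivAt (pFlow E q) (hamiltonianField E (pFlow E q t)) t := by
  refine hasDerivAt_phasePoint hq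
    (((hasDerivAt_cosh t).const_mul _).add ((hasDerivAt_sinh t).const_mul _))
    (((hasDerivAt_sinh t).const_mul _).add ((hasDerivAt_cosh t).const_mul _)) ?_
  conv_lhs => rw [energy_eq_of_pF_pos hq]
  linear_combination (-pF E q ^ 2 * (sinh q.1 ^ 2 - (cosh q.1 * q.2 / pF E q) ^ 2)) * cosh_sq t

lemma sinh_pFlow_fst (E : ℝ) (q : ℝ × ℝ) (t : ℝ) :
    sinh (pFlow E q t).1 = sinh q.1 * cosh t + cosh q.1 * q.2 / pF E q * sinh t :=
  sinh_arsinh _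

lemma bounded_forward_pFlow_iff (hq : 0 < pF E q) :
    (∃ M, ∀ t, 0 ≤ t → |(pFlow E q t).1| ≤ M) ↔ q.2 = -(pF E q * tanh q.1) := by
  rw [← exists_abs_sinh_le_iff, tanh_eq_sinh_div_cosh]
  simp only [sinh_pFlow_fst, bounded_forward_cosh_add_sinh_iff]
  field_simp
  constructor <;> intro h <;> linarith

lemma bounded_backward_pFlow_iff (hq : 0 < pF E q) :
    (∃ M, ∀ t, t ≤ 0 → |(pFlow E q t).1| ≤ M) ↔ q.2 = pF E q * tanh q.1 := by
  rw [← exists_abs_sinh_le_iff, tanh_eq_sinh_div_cosh]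
  simp only [sinh_pFlow_fst, bounded_backward_cosh_add_sinh_iff]
  field_simp
  constructor <;> intro h <;> linarith

lemma eq_origin_of_eq_neg_and_eq_mul_tanh {r ρ p : ℝ} (hp : p ≠ 0)
    (hin : ρ = -(p * tanh r)) (hout : ρ = p * tanh r) : (r, ρ) = (0, 0) := by
  have hptanh : p * tanh r = 0 := by linarith
  have htanh : tanh r = 0 := (mul_eq_zero.mp hptanh).resolve_left hp
  have hr : r = 0 := tanh_injective (htanh.trans tanh_zero.symm)
  rw [hr, hout, hptanh]

lemma bounded_pFlow_iff (hq : 0 < pF E q) :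
    (∃ M, ∀ t, ‖pFlow E q t‖ ≤ M) ↔ q = (0, 0) := by
  constructor
  · rintro ⟨M, hM⟩
    have hr (t : ℝ) : |(pFlow E q t).1| ≤ M := (norm_fst_le _).trans (hM t)
    exact eq_origin_of_eq_neg_and_eq_mul_tanh hq.ne'
      ((bounded_forward_pFlow_iff hq).mp ⟨M, fun t _ => hr t⟩)
      ((bounded_backward_pFlow_iff hq).mp ⟨M, fun t _ => hr t⟩)
  · rintro rfl
    exact ⟨0, fun t => by simp [pFlow_origin]⟩

end Flow

theorem stmt_11_general (E : ℝ) (q₀ : ℝ × ℝ) (hq₀ : 0 < pF E q₀) :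
    ∃ γ : ℝ → ℝ × ℝ, γ 0 = q₀ ∧
      (∀ t : ℝ, HasDerivAt γ
        (deriv (fun s => pF E ((γ t).1, s)) (γ t).2,
         -deriv (fun s => pF E (s, (γ t).2)) (γ t).1) t) ∧
      ((∃ M : ℝ, ∀ t : ℝ, 0 ≤ t → |(γ t).1| ≤ M) ↔
        q₀.2 = -(pF E q₀ * Real.tanh q₀.1)) ∧
      ((∃ M : ℝ, ∀ t : ℝ, t ≤ 0 → |(γ t).1| ≤ M) ↔
        q₀.2 = pF E q₀ * Real.tanh q₀.1) ∧
      ((∃ M : ℝ, ∀ t : ℝ, ‖γ t‖ ≤ M) ↔ q₀ = (0, 0)) :=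
  ⟨pFlow E q₀, pFlow_zero hq₀, hasDerivAt_pFlow hq₀, bounded_forward_pFlow_iff hq₀,
    bounded_backward_pFlow_iff hq₀, bounded_pFlow_iff hq₀⟩

/-- for the Hamiltonian system `r′ = ∂_ρ p`, `ρ′ = −∂_r p` of
`p(r,ρ) = √(ρ² + E/cosh²r)`: (i) every maximal solution is global in time;
(ii) the forward trajectory is bounded in `r` iff `ρ₀ = −p(r₀,ρ₀) tanh r₀`;
(iii) the backward trajectory is bounded in `r` iff `ρ₀ = p(r₀,ρ₀) tanh r₀`;
consequently the full trajectory is bounded iff `(r₀,ρ₀) = (0,0)`. -/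
theorem stmt_11 (E : ℝ) (hE : 0 < E) (q₀ : ℝ × ℝ) :
    ∃ γ : ℝ → ℝ × ℝ, γ 0 = q₀ ∧
      (∀ t : ℝ, HasDerivAt γ
        (deriv (fun s => pF E ((γ t).1, s)) (γ t).2,
         -deriv (fun s => pF E (s, (γ t).2)) (γ t).1) t) ∧
      ((∃ M : ℝ, ∀ t : ℝ, 0 ≤ t → |(γ t).1| ≤ M) ↔
        q₀.2 = -(pF E q₀ * Real.tanh q₀.1)) ∧
      ((∃ M : ℝ, ∀ t : ℝ, t ≤ 0 → |(γ t).1| ≤ M) ↔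
        q₀.2 = pF E q₀ * Real.tanh q₀.1) ∧
      ((∃ M : ℝ, ∀ t : ℝ, ‖γ t‖ ≤ M) ↔ q₀ = (0, 0)) :=
  stmt_11_general E q₀ (pF_pos hE q₀)
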